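/- Let A be a rooted directed tree that contains a fertile vertex v₀, i.e., |Chi^n(v)| → ∞ as n → ∞ for every v in ⋃_{n≥1} Chi^n(v₀). Then for every 1 < p < ∞ there exists a weight λ with 0 < |λ_v| ≤ 2 for all v such that B_λ : ℓ^p(A) → ℓ^p(A) is bounded and mixing, but sup over n of sup_{u∈Chi^n(v₀)} |λ(v₀→u)| < ∞, so B_λ has no hypercyclic algebra. -/

import Mathlib

open Filter Topology
open scoped ENNReal NNReal

/-- A rooted directed tree on a vertex set `A`: a root, a parent map (with the convention
`par root = root`), such that every vertex reaches the root after finitely many steps.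
This is equivalent to a connected acyclic directed graph in which every vertex other than
the root has exactly one parent and the root has none. -/
structure DirTree (A : Type*) where
  root : A
  par : A → A
  par_root : par root = root
  reaches : ∀ v, ∃ n, par^[n] v = root

namespace DirTree
variable {A : Type*} (T : DirTree A)

/-- The set of children of a vertex. -/
def chi (v : A) : Set A := {u | u ≠ T.root ∧ T.par u = v}

/-- `chiIter n v = Chi^n(v)`, the set of `n`-th descendants of `v`. -/
def chiIter : ℕ → A → Set A
  | 0, v => {v}
  | n + 1, v => ⋃ u ∈ chiIter n v, T.chi u

/-- For `u ∈ Chi^n(v)`, `wt lam n u = λ(v → u) = ∏_{k<n} λ_{Par^k(u)}`. -/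
def wt (lam : A → ℂ) (n : ℕ) (u : A) : ℂ :=
  ∏ k ∈ Finset.range n, lam (T.par^[k] u)

/-- `B` is the weighted backward shift with weight `lam` on `ℓ^p(A)`:
`(B f)(v) = ∑_{u ∈ Chi(v)} λ_u f(u)`. -/
def IsWBS (lam : A → ℂ) {p : ℝ≥0∞} [Fact (1 ≤ p)]
    (B : lp (fun _ : A => ℂ) p →L[ℂ] lp (fun _ : A => ℂ) p) : Prop :=
  ∀ f : lp (fun _ : A => ℂ) p, ∀ v : A,
    (B f : ∀ _ : A, ℂ) v = ∑' u : T.chi v, lam u * (f : ∀ _ : A, ℂ) u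

end DirTree

/-!
Select one or two children of every vertex, two wherever possible. Put weight `1` on the selected
edges below `v₀`, weight `2` on the other selected edges, and summably small positive weights on the
remaining ones; having at most two large weights per vertex makes the shift bounded.

Every weight below `v₀` has modulus at most `1`, so all the products `λ(v₀ → u)` are bounded. Still,
`∑_{u ∈ Chi^n(v)} |λ(v → u)|^q → ∞` for every `v`: by fertility, the number of selected paths of
weight `1` issuing from a descendant of `v₀` tends to infinity; a vertex with such a vertex below it
inherits the divergence; and every other vertex starts a selected path along which all weights
are `2`. By the equality case of Hölder's inequality, each basis vector `e_v` then has preimages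
under `B ^ n` of norm tending to `0`, while the forward orbit of `e_v` is eventually `0` because `v`
has finitely many ancestors. This is Kitai's criterion, so `B` is mixing.

A set closed under products contains, with `f ∈ ℓ^p`, powers of `f` that lie in `ℓ^1`. For
`h ∈ ℓ^1` the coordinate `(B ^ n h)(v₀) = ∑_{u ∈ Chi^n(v₀)} λ(v₀ → u) h(u)` is bounded in `n`, so
the orbit of `h` is not dense.
-/

section Holder

variable {ι 𝕜 : Type*} [RCLike 𝕜] {p q : ℝ}

theorem summable_norm_rpow_of_tsum_enorm_rpow_le {E : Type*} [SeminormedAddGroup E] {a : ι → E}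
    (hq : 0 ≤ q) {K : ℝ≥0} (ha : ∑' i, ‖a i‖ₑ ^ q ≤ K) :
    (Summable fun i => ‖a i‖ ^ q) ∧ ∑' i, ‖a i‖ ^ q ≤ K := by
  simp only [enorm_eq_nnnorm, ← ENNReal.coe_rpow_of_nonneg _ hq] at ha
  have hsum : Summable fun i => ‖a i‖₊ ^ q :=
    ENNReal.tsum_coe_ne_top_iff_summable.1 (ne_top_of_le_ne_top ENNReal.coe_ne_top ha)
  rw [← ENNReal.coe_tsum hsum, ENNReal.coe_le_coe] at ha
  exact ⟨by simpa using NNReal.summable_coe.2 hsum,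
    by simpa only [NNReal.coe_tsum, NNReal.coe_rpow, coe_nnnorm] using NNReal.coe_le_coe.2 ha⟩

theorem summable_norm_mul_and_norm_tsum_mul_rpow_le (hpq : p.HolderConjugate q) {a b : ι → 𝕜}
    {K : ℝ≥0} (ha : ∑' i, ‖a i‖ₑ ^ q ≤ K) (hb : Summable fun i => ‖b i‖ ^ p) :
    (Summable fun i => ‖a i * b i‖) ∧
      ‖∑' i, a i * b i‖ ^ p ≤ ((K : ℝ) ^ (1 / q)) ^ p * ∑' i, ‖b i‖ ^ p := by
  obtain ⟨ha, haK⟩ := summable_norm_rpow_of_tsum_enorm_rpow_le hpq.symm.nonneg ha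
  obtain ⟨hsum, hle⟩ := Real.summable_and_inner_le_Lp_mul_Lq_tsum_of_nonneg hpq.symm
    (fun i => norm_nonneg (a i)) (fun i => norm_nonneg (b i)) ha hb
  simp only [← norm_mul] at hsum hle
  have hb0 : 0 ≤ ∑' i, ‖b i‖ ^ p := tsum_nonneg fun _ => by positivity
  refine ⟨hsum, ?_⟩
  calc ‖∑' i, a i * b i‖ ^ p
      ≤ ((K : ℝ) ^ (1 / q) * (∑' i, ‖b i‖ ^ p) ^ (1 / p)) ^ p := by
        refine Real.rpow_le_rpow (norm_nonneg _) ?_ hpq.nonneg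
        refine (norm_tsum_le_tsum_norm hsum).trans (hle.trans ?_)
        gcongr
        exact hpq.symm.one_div_nonneg
    _ = ((K : ℝ) ^ (1 / q)) ^ p * ∑' i, ‖b i‖ ^ p := by
        rw [Real.mul_rpow (by positivity) (by positivity), ← Real.rpow_mul hb0,
          one_div_mul_cancel hpq.ne_zero, Real.rpow_one]

theorem exists_sum_mul_eq_one_and_sum_norm_rpow_eq (hpq : p.HolderConjugate q) {F : Finset ι}
    {a : ι → 𝕜} (ha : 0 < ∑ i ∈ F, ‖a i‖ ^ q) :
    ∃ b : ι → 𝕜, ∑ i ∈ F, b i * a i = 1 ∧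
      ∑ i ∈ F, ‖b i‖ ^ p = (∑ i ∈ F, ‖a i‖ ^ q) ^ (1 - p) := by
  set S := ∑ i ∈ F, ‖a i‖ ^ q
  -- The equality case of Hölder's inequality: `b i = |a i| ^ q / (S * a i)`.
  have hmul : ∀ i, ((‖a i‖ ^ q / S : ℝ) : 𝕜) * (a i)⁻¹ * a i = ((‖a i‖ ^ q / S : ℝ) : 𝕜) := by
    intro i
    rcases eq_or_ne (a i) 0 with h | h
    · simp [h, Real.zero_rpow hpq.symm.ne_zero]
    · exact inv_mul_cancel_right₀ h _
  have hnorm : ∀ i, ‖((‖a i‖ ^ q / S : ℝ) : 𝕜) * (a i)⁻¹‖ ^ p = ‖a i‖ ^ q / S ^ p := by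
    intro i
    rcases eq_or_ne (a i) 0 with h | h
    · simp [h, Real.zero_rpow hpq.symm.ne_zero, Real.zero_rpow hpq.ne_zero]
    · have h0 : 0 < ‖a i‖ := norm_pos_iff.2 h
      rw [norm_mul, norm_inv, RCLike.norm_ofReal, abs_of_nonneg (by positivity), div_mul_eq_mul_div,
        ← div_eq_mul_inv, ← Real.rpow_sub_one h0.ne', Real.div_rpow (by positivity) ha.le,
        ← Real.rpow_mul h0.le, hpq.symm.sub_one_mul_conj]
  refine ⟨fun i => ((‖a i‖ ^ q / S : ℝ) : 𝕜) * (a i)⁻¹, ?_, ?_⟩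
  · rw [Finset.sum_congr rfl fun i _ => hmul i, ← RCLike.ofReal_sum, ← Finset.sum_div,
      div_self ha.ne', RCLike.ofReal_one]
  · rw [Finset.sum_congr rfl fun i _ => hnorm i, ← Finset.sum_div, Real.rpow_sub ha, Real.rpow_one]

end Holder

theorem exists_finset_subset_lt_sum_of_lt_tsum {ι : Type*} {f : ι → ℝ≥0∞} {s : Set ι} {c : ℝ≥0∞}
    (h : c < ∑' i : s, f i) : ∃ F : Finset ι, ↑F ⊆ s ∧ c < ∑ i ∈ F, f i := by
  rw [ENNReal.tsum_eq_iSup_sum, lt_iSup_iff] at h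
  obtain ⟨F, hF⟩ := h
  refine ⟨F.map (.subtype _), ?_, by rwa [Finset.sum_map]⟩
  simp

theorem exists_finset_subset_card_le_two {α : Type*} {s : Set α} (hs : s.Nonempty) :
    ∃ t : Finset α, ↑t ⊆ s ∧ t.Nonempty ∧ t.card ≤ 2 ∧ (s.Nontrivial → t.Nontrivial) := by
  classical
  obtain ⟨a, ha⟩ := hs
  by_cases h : s.Nontrivial
  · obtain ⟨b, hb, hba⟩ := h.exists_ne a
    refine ⟨{b, a}, ?_, Finset.insert_nonempty b {a}, Finset.card_le_two,
      fun _ => ⟨b, ?_, a, ?_, hba⟩⟩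
    · simpa using Set.pair_subset hb ha
    · simp
    · simp
  · exact ⟨{a}, by simpa using ha, Finset.singleton_nonempty a, by simp, fun h' => absurd h' h⟩

section Kitai

variable {ι 𝕜 E F : Type*} [Semiring 𝕜] [AddCommMonoid E] [TopologicalSpace E] [Module 𝕜 E]
  [AddCommMonoid F] [TopologicalSpace F] [Module 𝕜 F] {l : Filter ι}

theorem tendsto_zero_of_mem_span [ContinuousAdd F] [ContinuousConstSMul 𝕜 F]
    {T : ι → E →L[𝕜] F} {X : Set E} (hX : ∀ x ∈ X, Tendsto (fun i => T i x) l (𝓝 0))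
    {x : E} (hx : x ∈ Submodule.span 𝕜 X) : Tendsto (fun i => T i x) l (𝓝 0) := by
  induction hx using Submodule.span_induction with
  | mem x hx => exact hX x hx
  | zero => simpa only [map_zero] using tendsto_const_nhds
  | add x y _ _ hx hy => simpa only [map_add, add_zero] using hx.add hy
  | smul c x _ hx => simpa only [map_smul, smul_zero] using hx.const_smul c

variable [ContinuousAdd E] [ContinuousConstSMul 𝕜 E]

/-- The submodule of vectors that eventually have arbitrarily small preimages under the
operators `T i`. -/
def smallPreimages (l : Filter ι) (T : ι → E →L[𝕜] F) : Submodule 𝕜 F where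
  carrier := {y | ∀ U ∈ 𝓝 (0 : E), ∀ᶠ i in l, y ∈ T i '' U}
  zero_mem' U hU := Eventually.of_forall fun i => ⟨0, mem_of_mem_nhds hU, map_zero (T i)⟩
  add_mem' := by
    intro y z hy hz U hU
    obtain ⟨V, hV, hVU⟩ := exists_nhds_zero_half hU
    filter_upwards [hy V hV, hz V hV]
    rintro i ⟨a, ha, rfl⟩ ⟨b, hb, rfl⟩
    exact ⟨a + b, hVU a ha b hb, map_add (T i) a b⟩
  smul_mem' := by
    intro c y hy U hU
    have hc : (c • ·) ⁻¹' U ∈ 𝓝 (0 : E) :=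
      (continuous_const_smul c).continuousAt.preimage_mem_nhds (by rwa [smul_zero])
    filter_upwards [hy _ hc]
    rintro i ⟨a, ha, rfl⟩
    exact ⟨c • a, ha, map_smul (T i) c a⟩

theorem kitai_criterion [ContinuousAdd F] [ContinuousConstSMul 𝕜 F] {T : ι → E →L[𝕜] F} {X : Set E}
    {Y : Set F} (hX : Dense (Submodule.span 𝕜 X : Set E))
    (hY : Dense (Submodule.span 𝕜 Y : Set F)) (hX0 : ∀ x ∈ X, Tendsto (fun i => T i x) l (𝓝 0))
    (hYT : Y ⊆ smallPreimages l T) {U : Set E} {V : Set F} (hU : IsOpen U) (hU' : U.Nonempty)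
    (hV : IsOpen V) (hV' : V.Nonempty) : ∀ᶠ i in l, ∃ x ∈ U, T i x ∈ V := by
  obtain ⟨x, hxU, hx⟩ := hX.inter_open_nonempty U hU hU'
  obtain ⟨y, hyV, hy⟩ := hY.inter_open_nonempty V hV hV'
  have hUx : (x + ·) ⁻¹' U ∈ 𝓝 (0 : E) :=
    (continuous_const_add x).continuousAt.preimage_mem_nhds (by simpa using hU.mem_nhds hxU)
  have hTx : Tendsto (fun i => T i x + y) l (𝓝 y) := by
    simpa only [zero_add] using (tendsto_zero_of_mem_span hX0 hx).add_const y
  filter_upwards [hTx.eventually_mem (hV.mem_nhds hyV), Submodule.span_le.2 hYT hy _ hUx]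
  rintro i hi ⟨a, ha, rfl⟩
  exact ⟨x + a, ha, by rwa [map_add]⟩

end Kitai

theorem not_denseRange_of_norm_apply_le {ι 𝕜 E : Type*} [NontriviallyNormedField 𝕜]
    [AddCommGroup E] [TopologicalSpace E] [Module 𝕜 E] {φ : E →L[𝕜] 𝕜} (hφ : φ ≠ 0) {x : ι → E}
    {M : ℝ} (hx : ∀ i, ‖φ (x i)‖ ≤ M) : ¬ DenseRange x := by
  intro hdense
  have hsurj : Function.Surjective φ :=
    LinearMap.surjective (f := (φ : E →ₗ[𝕜] 𝕜)) fun h => hφ (ContinuousLinearMap.coe_injective h)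
  have hball : DenseRange (φ ∘ x) := hsurj.denseRange.comp hdense φ.continuous
  obtain ⟨z, hz⟩ := NormedField.exists_lt_norm 𝕜 M
  have hsub : Set.range (φ ∘ x) ⊆ Metric.closedBall 0 M :=
    Set.range_subset_iff.2 fun i => mem_closedBall_zero_iff.2 (hx i)
  have := closure_minimal hsub Metric.isClosed_closedBall (hball z)
  exact hz.not_ge (mem_closedBall_zero_iff.1 this)

section LpSingle

variable {A 𝕜 : Type*} [NormedField 𝕜] [DecidableEq A] {p : ℝ≥0∞}

theorem lp_single_eq_smul_single_one (u : A) (z : 𝕜) :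
    lp.single p u z = z • (lp.single p u 1 : lp (fun _ : A => 𝕜) p) := by
  rw [← lp.single_smul, smul_eq_mul, mul_one]

theorem dense_span_range_lp_single_one [Fact (1 ≤ p)] (hp : p ≠ ∞) :
    Dense (Submodule.span 𝕜 (Set.range fun u : A => (lp.single p u 1 : lp (fun _ : A => 𝕜) p)) :
      Set (lp (fun _ : A => 𝕜) p)) := by
  intro f
  refine mem_closure_of_tendsto (lp.hasSum_single hp f) (Eventually.of_forall fun s => ?_)
  refine Submodule.sum_mem _ fun u _ => ?_
  rw [lp_single_eq_smul_single_one]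
  exact Submodule.smul_mem _ _ (Submodule.subset_span ⟨u, rfl⟩)

end LpSingle

section LpPow

variable {A 𝕜 : Type*} [NormedField 𝕜] {p : ℝ≥0∞} {S : Set (lp (fun _ : A => 𝕜) p)}

theorem exists_mem_apply_eq_pow_succ
    (hS : ∀ f ∈ S, ∀ g ∈ S, ∃ h ∈ S, ∀ v : A,
      (h : ∀ _ : A, 𝕜) v = (f : ∀ _ : A, 𝕜) v * (g : ∀ _ : A, 𝕜) v)
    {f : lp (fun _ : A => 𝕜) p} (hf : f ∈ S) (m : ℕ) :
    ∃ h ∈ S, ∀ v : A, (h : ∀ _ : A, 𝕜) v = (f : ∀ _ : A, 𝕜) v ^ (m + 1) := by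
  induction m with
  | zero => exact ⟨f, hf, fun v => (pow_one _).symm⟩
  | succ m ih =>
    obtain ⟨g, hg, hgf⟩ := ih
    obtain ⟨h, hh, hhg⟩ := hS g hg f hf
    exact ⟨h, hh, fun v => by rw [hhg, hgf, ← pow_succ]⟩

theorem summable_norm_pow_of_le_natCast {f : lp (fun _ : A => 𝕜) p} {m : ℕ} (hm0 : 0 < m)
    (hm : p ≤ m) : Summable fun v => ‖(f : ∀ _ : A, 𝕜) v ^ m‖ := by
  have hmem : Memℓp (f : ∀ _ : A, 𝕜) (m : ℝ≥0∞) := (lp.memℓp f).of_exponent_ge hm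
  simpa using hmem.summable (by simpa using hm0)

theorem exists_mem_ne_zero_summable_norm (hp : p ≠ ∞)
    (hS : ∀ f ∈ S, ∀ g ∈ S, ∃ h ∈ S, ∀ v : A,
      (h : ∀ _ : A, 𝕜) v = (f : ∀ _ : A, 𝕜) v * (g : ∀ _ : A, 𝕜) v)
    {f : lp (fun _ : A => 𝕜) p} (hf : f ∈ S) (hf0 : f ≠ 0) :
    ∃ h ∈ S, h ≠ 0 ∧ Summable fun v => ‖(h : ∀ _ : A, 𝕜) v‖ := by
  obtain ⟨m, hm⟩ := ENNReal.exists_nat_gt hp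
  obtain ⟨h, hh, hhf⟩ := exists_mem_apply_eq_pow_succ hS hf m
  refine ⟨h, hh, ?_, ?_⟩
  · rintro rfl
    exact hf0 (lp.ext (funext fun v => eq_zero_of_pow_eq_zero (hhf v).symm))
  · simpa only [hhf] using
      summable_norm_pow_of_le_natCast m.succ_pos (hm.le.trans (by exact_mod_cast m.le_succ))

end LpPow

namespace DirTree
variable {A : Type*} (T : DirTree A)

section Generations

theorem mem_chiIter_succ {n : ℕ} {u v : A} :
    u ∈ T.chiIter (n + 1) v ↔ u ≠ T.root ∧ T.par u ∈ T.chiIter n v := by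
  simp [chiIter, chi]

theorem mem_chiIter_iff {n : ℕ} {u v : A} :
    u ∈ T.chiIter n v ↔ (∀ k < n, T.par^[k] u ≠ T.root) ∧ T.par^[n] u = v := by
  induction n generalizing u with
  | zero => simp [chiIter]
  | succ n ih =>
    rw [mem_chiIter_succ, ih, Nat.forall_lt_succ_left, and_assoc]
    rfl

theorem mem_chiIter_add {m n : ℕ} {u v w : A} (hv : v ∈ T.chiIter m w)
    (hu : u ∈ T.chiIter n v) : u ∈ T.chiIter (m + n) w := by
  induction n generalizing u with
  | zero => rwa [Set.mem_singleton_iff.1 hu]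
  | succ n ih =>
    rw [mem_chiIter_succ] at hu
    exact T.mem_chiIter_succ.2 ⟨hu.1, ih hu.2⟩

theorem pairwise_disjoint_chi : Pairwise (Function.onFun Disjoint T.chi) := fun _ _ hvw =>
  Set.disjoint_left.2 fun _ hu hu' => hvw (hu.2.symm.trans hu'.2)

/-- The descendants of `v` other than `v` itself. -/
def strictDesc (v : A) : Set A := {u | ∃ n, 0 < n ∧ u ∈ T.chiIter n v}

theorem mem_strictDesc_of_mem_chiIter {n : ℕ} {u v w : A} (hv : v ∈ T.strictDesc w)
    (hu : u ∈ T.chiIter n v) : u ∈ T.strictDesc w := by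
  obtain ⟨m, hm, hv⟩ := hv
  exact ⟨m + n, by omega, T.mem_chiIter_add hv hu⟩

end Generations

section Weights

variable {lam : A → ℂ}

theorem wt_succ (lam : A → ℂ) (n : ℕ) (u : A) :
    T.wt lam (n + 1) u = T.wt lam n (T.par u) * lam u := by
  simp only [wt, Finset.prod_range_succ', Function.iterate_succ_apply, Function.iterate_zero_apply]

theorem wt_add (lam : A → ℂ) (m n : ℕ) (u : A) :
    T.wt lam (m + n) u = T.wt lam m u * T.wt lam n (T.par^[m] u) := by
  simp only [wt, Finset.prod_range_add, ← Function.iterate_add_apply, add_comm]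

theorem wt_ne_zero (h : ∀ u, lam u ≠ 0) (n : ℕ) (u : A) : T.wt lam n u ≠ 0 :=
  Finset.prod_ne_zero_iff.2 fun _ _ => h _

theorem norm_wt_le_one {v : A} (h : ∀ u ∈ T.strictDesc v, ‖lam u‖ ≤ 1) {n : ℕ} {u : A}
    (hu : u ∈ T.chiIter n v) : ‖T.wt lam n u‖ ≤ 1 := by
  induction n generalizing u with
  | zero => simp [wt]
  | succ n ih =>
    rw [wt_succ, norm_mul]
    exact mul_le_one₀ (ih (T.mem_chiIter_succ.1 hu).2) (norm_nonneg _)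
      (h u ⟨n + 1, n.succ_pos, hu⟩)

/-- The sum `∑_{u ∈ Chi^n(v)} |λ(v → u)|^q` governing the dynamics of the shift, as an extended
nonnegative real. -/
noncomputable def wtSum (lam : A → ℂ) (q : ℝ) (n : ℕ) (v : A) : ℝ≥0∞ :=
  ∑' u : T.chiIter n v, ‖T.wt lam n u‖ₑ ^ q

theorem sum_le_wtSum {q : ℝ} {n : ℕ} {v : A} {F : Finset A} (hF : ↑F ⊆ T.chiIter n v) :
    ∑ u ∈ F, ‖T.wt lam n u‖ₑ ^ q ≤ T.wtSum lam q n v := by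
  rw [← Finset.tsum_subtype]
  exact ENNReal.tsum_mono_subtype (fun u => ‖T.wt lam n u‖ₑ ^ q) hF

theorem mul_wtSum_le_wtSum_add {q : ℝ} (hq : 0 ≤ q) {k n : ℕ} {v w : A} (hw : w ∈ T.chiIter k v) :
    ‖T.wt lam k w‖ₑ ^ q * T.wtSum lam q n w ≤ T.wtSum lam q (n + k) v := by
  have hterm : ∀ u : T.chiIter n w,
      ‖T.wt lam k w‖ₑ ^ q * ‖T.wt lam n u‖ₑ ^ q = ‖T.wt lam (n + k) u‖ₑ ^ q := fun u => by
    rw [T.wt_add, (T.mem_chiIter_iff.1 u.2).2, enorm_mul, ENNReal.mul_rpow_of_nonneg _ _ hq,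
      mul_comm]
  rw [wtSum, ← ENNReal.tsum_mul_left, tsum_congr hterm]
  exact ENNReal.tsum_mono_subtype (fun u => ‖T.wt lam (n + k) u‖ₑ ^ q) fun u hu =>
    add_comm k n ▸ T.mem_chiIter_add hw hu

theorem tendsto_wtSum_of_mem_chiIter {q : ℝ} (hq : 0 ≤ q) (hlam : ∀ u, lam u ≠ 0) {k : ℕ} {v w : A}
    (hw : w ∈ T.chiIter k v) (h : Tendsto (fun n => T.wtSum lam q n w) atTop (𝓝 ∞)) :
    Tendsto (fun n => T.wtSum lam q n v) atTop (𝓝 ∞) := by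
  have hc : ‖T.wt lam k w‖ₑ ^ q ≠ 0 :=
    (ENNReal.rpow_pos (enorm_pos.2 (T.wt_ne_zero hlam k w)) enorm_ne_top).ne'
  have hmul := ENNReal.Tendsto.const_mul (a := ‖T.wt lam k w‖ₑ ^ q) h (.inl ENNReal.top_ne_zero)
  rw [ENNReal.mul_top hc] at hmul
  exact (tendsto_add_atTop_iff_nat k).1 <|
    tendsto_nhds_top_mono hmul (Eventually.of_forall fun n => T.mul_wtSum_le_wtSum_add hq hw)

end Weights

section Boundedness

theorem sum_tsum_chi_le {g : A → ℝ} (hg : Summable g) (hg0 : ∀ u, 0 ≤ g u) (s : Finset A) :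
    ∑ v ∈ s, ∑' u : T.chi v, g u ≤ ∑' u, g u := by
  rw [← Summable.tsum_finset_bUnion_disjoint
    (fun v _ w _ hvw => T.pairwise_disjoint_chi hvw) fun v _ => hg.subtype _]
  exact hg.tsum_subtype_le _ _ hg0

variable {p : ℝ≥0∞} [Fact (1 ≤ p)]

theorem exists_isWBS {q : ℝ} (hpq : p.toReal.HolderConjugate q) {lam : A → ℂ} {K : ℝ≥0}
    (hlam : ∀ v, ∑' u : T.chi v, ‖lam u‖ₑ ^ q ≤ K) :
    ∃ B : lp (fun _ : A => ℂ) p →L[ℂ] lp (fun _ : A => ℂ) p, T.IsWBS lam B := by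
  have hsummable (f : lp (fun _ : A => ℂ) p) :
      Summable fun u => ‖(f : ∀ _ : A, ℂ) u‖ ^ p.toReal := (lp.memℓp f).summable hpq.pos
  have holder (f : lp (fun _ : A => ℂ) p) (v : A) :=
    summable_norm_mul_and_norm_tsum_mul_rpow_le hpq (hlam v) ((hsummable f).subtype (T.chi v))
  have hbound (f : lp (fun _ : A => ℂ) p) (s : Finset A) :
      ∑ v ∈ s, ‖∑' u : T.chi v, lam u * (f : ∀ _ : A, ℂ) u‖ ^ p.toReal ≤
        ((K : ℝ) ^ (1 / q) * ‖f‖) ^ p.toReal := by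
    refine (Finset.sum_le_sum fun v _ => (holder f v).2).trans ?_
    rw [← Finset.mul_sum, Real.mul_rpow (by positivity) (by positivity),
      lp.norm_rpow_eq_tsum hpq.pos f]
    exact mul_le_mul_of_nonneg_left
      (T.sum_tsum_chi_le (hsummable f) (fun _ => by positivity) s) (by positivity)
  let L : lp (fun _ : A => ℂ) p →ₗ[ℂ] lp (fun _ : A => ℂ) p :=
    { toFun := fun f => ⟨fun v => ∑' u : T.chi v, lam u * (f : ∀ _ : A, ℂ) u,
        memℓp_gen' (hbound f)⟩
      map_add' := fun f g => by
        ext v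
        simp only [lp.coeFn_add, Pi.add_apply, mul_add]
        exact (holder f v).1.of_norm.tsum_add (holder g v).1.of_norm
      map_smul' := fun c f => by
        ext v
        simp only [lp.coeFn_smul, Pi.smul_apply, smul_eq_mul, RingHom.id_apply, ← tsum_mul_left]
        exact tsum_congr fun u => mul_left_comm _ _ _ }
  exact ⟨L.mkContinuous ((K : ℝ) ^ (1 / q)) fun f =>
    lp.norm_le_of_forall_sum_le hpq.pos (by positivity) (hbound f), fun f v => rfl⟩

end Boundedness

section Shift

variable {T} {lam : A → ℂ} {p : ℝ≥0∞} [Fact (1 ≤ p)]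
  {B : lp (fun _ : A => ℂ) p →L[ℂ] lp (fun _ : A => ℂ) p}

theorem IsWBS.apply_single [DecidableEq A] (hB : T.IsWBS lam B) (u : A) :
    B (lp.single p u 1) = if u = T.root then 0 else lam u • lp.single p (T.par u) 1 := by
  ext v
  rw [hB, tsum_subtype (T.chi v) fun w => lam w * (lp.single p u (1 : ℂ) : ∀ _ : A, ℂ) w,
    tsum_eq_single u fun w hw => by
      rw [Set.indicator_apply_eq_zero, lp.single_apply_ne _ _ _ hw, mul_zero]
      exact fun _ => rfl]
  split_ifs with hu
  · exact Set.indicator_of_notMem (fun h => h.1 hu) _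
  · by_cases hv : T.par u = v
    · subst hv
      rw [Set.indicator_of_mem (show u ∈ T.chi (T.par u) from ⟨hu, rfl⟩)]
      simp
    · rw [Set.indicator_of_notMem fun h => hv h.2]
      simp [Ne.symm hv]

theorem IsWBS.pow_single_of_mem_chiIter [DecidableEq A] (hB : T.IsWBS lam B) {n : ℕ} {u v : A}
    (hu : u ∈ T.chiIter n v) : (B ^ n) (lp.single p u 1) = T.wt lam n u • lp.single p v 1 := by
  induction n generalizing u with
  | zero => simp [wt, Set.mem_singleton_iff.1 hu]
  | succ n ih =>
    rw [mem_chiIter_succ] at hu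
    rw [pow_succ, mul_apply_eq_comp, hB.apply_single, if_neg hu.1, map_smul, ih hu.2,
      smul_smul, wt_succ, mul_comm]

theorem IsWBS.pow_single_of_iterate_par_eq_root [DecidableEq A] (hB : T.IsWBS lam B) {k n : ℕ}
    (hkn : k < n) {u : A} (hu : T.par^[k] u = T.root) : (B ^ n) (lp.single p u 1) = 0 := by
  induction n generalizing k u with
  | zero => omega
  | succ n ih =>
    rw [pow_succ, mul_apply_eq_comp, hB.apply_single]
    split_ifs with hr
    · exact map_zero _
    · obtain _ | k := k
      · exact absurd hu hr
      · rw [map_smul, ih (k := k) (by omega) hu, smul_zero]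

theorem IsWBS.tendsto_pow_single [DecidableEq A] (hB : T.IsWBS lam B) (u : A) :
    Tendsto (fun n => (B ^ n) (lp.single p u 1)) atTop (𝓝 0) := by
  obtain ⟨k, hk⟩ := T.reaches u
  refine tendsto_const_nhds.congr' ?_
  filter_upwards [eventually_gt_atTop k] with n hn
  exact (hB.pow_single_of_iterate_par_eq_root hn hk).symm

theorem IsWBS.pow_single_apply [DecidableEq A] (hB : T.IsWBS lam B) (n : ℕ) (u v : A) :
    ((B ^ n) (lp.single p u 1) : ∀ _ : A, ℂ) v = (T.chiIter n v).indicator (T.wt lam n) u := by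
  by_cases hroot : ∀ k < n, T.par^[k] u ≠ T.root
  · rw [hB.pow_single_of_mem_chiIter (T.mem_chiIter_iff.2 ⟨hroot, rfl⟩)]
    by_cases hv : T.par^[n] u = v
    · rw [Set.indicator_of_mem (T.mem_chiIter_iff.2 ⟨hroot, hv⟩)]
      simp [hv]
    · rw [Set.indicator_of_notMem fun hu => hv (T.mem_chiIter_iff.1 hu).2]
      simp [Ne.symm hv]
  · rw [Set.indicator_of_notMem fun hu => hroot (T.mem_chiIter_iff.1 hu).1]
    push Not at hroot
    obtain ⟨k, hkn, hk⟩ := hroot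
    rw [hB.pow_single_of_iterate_par_eq_root hkn hk]
    rfl

theorem IsWBS.hasSum_pow_apply (hB : T.IsWBS lam B) (hp : p ≠ ∞) (n : ℕ)
    (f : lp (fun _ : A => ℂ) p) (v : A) :
    HasSum (fun u => (f : ∀ _ : A, ℂ) u * (T.chiIter n v).indicator (T.wt lam n) u)
      (((B ^ n) f : ∀ _ : A, ℂ) v) := by
  classical
  have hs := ((lp.hasSum_single hp f).mapL (B ^ n)).mapL (lp.evalCLM ℂ (fun _ : A => ℂ) p v)
  have hterm (u : A) : (f : ∀ _ : A, ℂ) u * (T.chiIter n v).indicator (T.wt lam n) u =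
      lp.evalCLM ℂ (fun _ : A => ℂ) p v ((B ^ n) (lp.single p u ((f : ∀ _ : A, ℂ) u))) := by
    rw [lp_single_eq_smul_single_one, map_smul, map_smul, smul_eq_mul, ← hB.pow_single_apply]
    rfl
  simp only [hterm]
  exact hs

theorem IsWBS.norm_pow_apply_le (hB : T.IsWBS lam B) (hp : p ≠ ∞) {C : ℝ} {v : A}
    (hC : ∀ n, ∀ u ∈ T.chiIter n v, ‖T.wt lam n u‖ ≤ C) {f : lp (fun _ : A => ℂ) p}
    (hf : Summable fun u => ‖(f : ∀ _ : A, ℂ) u‖) (n : ℕ) :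
    ‖((B ^ n) f : ∀ _ : A, ℂ) v‖ ≤ (∑' u, ‖(f : ∀ _ : A, ℂ) u‖) * C := by
  have hC0 : 0 ≤ C := (norm_nonneg _).trans (hC 0 v rfl)
  rw [← (hB.hasSum_pow_apply hp n f v).tsum_eq]
  refine tsum_of_norm_bounded (hf.hasSum.mul_right C) fun u => ?_
  rw [norm_mul]
  gcongr
  by_cases hu : u ∈ T.chiIter n v
  · simpa only [Set.indicator_of_mem hu] using hC n u hu
  · simpa only [Set.indicator_of_notMem hu, norm_zero] using hC0

theorem IsWBS.not_denseRange_pow (hB : T.IsWBS lam B) (hp : p ≠ ∞) {C : ℝ} {v : A}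
    (hC : ∀ n, ∀ u ∈ T.chiIter n v, ‖T.wt lam n u‖ ≤ C) {f : lp (fun _ : A => ℂ) p}
    (hf : Summable fun u => ‖(f : ∀ _ : A, ℂ) u‖) : ¬ DenseRange fun n : ℕ => (B ^ n) f := by
  classical
  have hφ : lp.evalCLM ℂ (fun _ : A => ℂ) p v ≠ 0 := fun h => by
    have hv := DFunLike.congr_fun h (lp.single p v 1 : lp (fun _ : A => ℂ) p)
    exact one_ne_zero ((lp.single_apply_self (E := fun _ : A => ℂ) p v 1).symm.trans hv)
  exact not_denseRange_of_norm_apply_le hφ (hB.norm_pow_apply_le hp hC hf)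

end Shift

section Mixing

variable {T} {lam : A → ℂ} {p : ℝ≥0∞} [Fact (1 ≤ p)]
  {B : lp (fun _ : A => ℂ) p →L[ℂ] lp (fun _ : A => ℂ) p} {q : ℝ}

theorem IsWBS.exists_norm_lt_pow_apply_eq_single [DecidableEq A] (hB : T.IsWBS lam B)
    (hpq : p.toReal.HolderConjugate q) {n : ℕ} {v : A} {ε : ℝ} (hε : 0 < ε)
    (hsum : ENNReal.ofReal (ε ^ (-q)) < T.wtSum lam q n v) :
    ∃ f : lp (fun _ : A => ℂ) p, ‖f‖ < ε ∧ (B ^ n) f = lp.single p v 1 := by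
  obtain ⟨F, hF, hlt⟩ :=
    exists_finset_subset_lt_sum_of_lt_tsum (f := fun u => ‖T.wt lam n u‖ₑ ^ q) hsum
  have hlt : ε ^ (-q) < ∑ u ∈ F, ‖T.wt lam n u‖ ^ q := by
    simp only [← ofReal_norm, ENNReal.ofReal_rpow_of_nonneg (norm_nonneg _)
      hpq.symm.nonneg] at hlt
    rw [← ENNReal.ofReal_sum_of_nonneg fun _ _ => by positivity] at hlt
    exact (ENNReal.ofReal_lt_ofReal_iff_of_nonneg (by positivity)).1 hlt
  obtain ⟨b, hb, hbp⟩ :=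
    exists_sum_mul_eq_one_and_sum_norm_rpow_eq hpq ((by positivity : 0 < ε ^ (-q)).trans hlt)
  refine ⟨∑ u ∈ F, lp.single p u (b u), ?_, ?_⟩
  · refine (Real.rpow_lt_rpow_iff (norm_nonneg _) hε.le hpq.pos).1 ?_
    calc ‖∑ u ∈ F, lp.single p u (b u)‖ ^ p.toReal
        = (∑ u ∈ F, ‖T.wt lam n u‖ ^ q) ^ (1 - p.toReal) := by
          rw [lp.norm_sum_single hpq.pos, hbp]
      _ < (ε ^ (-q)) ^ (1 - p.toReal) :=
          Real.rpow_lt_rpow_of_neg (by positivity) hlt (sub_neg.2 hpq.lt)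
      _ = ε ^ p.toReal := by
          rw [← Real.rpow_mul hε.le, neg_mul, ← mul_neg, neg_sub, mul_comm, hpq.sub_one_mul_conj]
  · have hterm : ∀ u ∈ F,
        (B ^ n) (lp.single p u (b u)) = (b u * T.wt lam n u) • lp.single p v 1 := fun u hu => by
      rw [lp_single_eq_smul_single_one, map_smul, hB.pow_single_of_mem_chiIter (hF hu), smul_smul]
    rw [map_sum, Finset.sum_congr rfl hterm, ← Finset.sum_smul, hb, one_smul]

theorem IsWBS.single_mem_smallPreimages [DecidableEq A] (hB : T.IsWBS lam B)
    (hpq : p.toReal.HolderConjugate q) {v : A}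
    (hsum : Tendsto (fun n => T.wtSum lam q n v) atTop (𝓝 ∞)) :
    lp.single p v 1 ∈ smallPreimages atTop fun n : ℕ => B ^ n := by
  intro U hU
  obtain ⟨ε, hε, hεU⟩ := Metric.mem_nhds_iff.1 hU
  filter_upwards [hsum.eventually_const_lt ENNReal.ofReal_lt_top] with n hn
  obtain ⟨f, hf, hfv⟩ := hB.exists_norm_lt_pow_apply_eq_single hpq hε hn
  exact ⟨f, hεU (mem_ball_zero_iff.2 hf), hfv⟩

theorem IsWBS.eventually_exists_pow_apply_mem (hB : T.IsWBS lam B) (hp : p ≠ ∞)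
    (hpq : p.toReal.HolderConjugate q)
    (hsum : ∀ v, Tendsto (fun n => T.wtSum lam q n v) atTop (𝓝 ∞))
    {U V : Set (lp (fun _ : A => ℂ) p)} (hU : IsOpen U) (hU' : U.Nonempty) (hV : IsOpen V)
    (hV' : V.Nonempty) : ∀ᶠ n in atTop, ∃ f ∈ U, (B ^ n) f ∈ V := by
  classical
  exact kitai_criterion (dense_span_range_lp_single_one hp) (dense_span_range_lp_single_one hp)
    (Set.forall_mem_range.2 hB.tendsto_pow_single)
    (Set.range_subset_iff.2 fun v => hB.single_mem_smallPreimages hpq (hsum v)) hU hU' hV hV'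

end Mixing

section Thinning

/-- `t` selects one or two children of every vertex, and two whenever the vertex has at least two.
The selected edges form a subforest with binary branching, along which weights of constant modulus
can be placed without destroying boundedness of the shift. -/
structure IsThinning (t : A → Finset A) : Prop where
  subset_chi : ∀ w, ↑(t w) ⊆ T.chi w
  nonempty : ∀ w, (t w).Nonempty
  card_le_two : ∀ w, (t w).card ≤ 2
  nontrivial : ∀ w, (T.chi w).Nontrivial → (t w).Nontrivial

theorem exists_isThinning (hleaf : ∀ v, (T.chi v).Nonempty) : ∃ t, T.IsThinning t := by
  choose t ht using fun v => exists_finset_subset_card_le_two (hleaf v)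
  exact ⟨t, fun w => (ht w).1, fun w => (ht w).2.1, fun w => (ht w).2.2.1, fun w => (ht w).2.2.2⟩

/-- The generations of the thinned tree: `thinIter t n v` consists of the `n`-th descendants of `v`
along selected edges, the counterpart of `chiIter`. -/
def thinIter [DecidableEq A] (t : A → Finset A) : ℕ → A → Finset A
  | 0, v => {v}
  | n + 1, v => (thinIter t n v).biUnion t

variable {T} [DecidableEq A] {t : A → Finset A}

theorem IsThinning.thinIter_subset_chiIter (ht : T.IsThinning t) (n : ℕ) (v : A) :
    ↑(thinIter t n v) ⊆ T.chiIter n v := by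
  induction n with
  | zero => simp [thinIter, chiIter]
  | succ n ih =>
    intro u hu
    obtain ⟨w, hw, hu⟩ := Finset.mem_biUnion.1 (Finset.mem_coe.1 hu)
    exact Set.mem_biUnion (ih hw) (ht.subset_chi w hu)

theorem IsThinning.card_thinIter_succ (ht : T.IsThinning t) (n : ℕ) (v : A) :
    (thinIter t (n + 1) v).card = ∑ w ∈ thinIter t n v, (t w).card :=
  Finset.card_biUnion fun w _ w' _ hww' => Finset.disjoint_coe.1 <|
    (T.pairwise_disjoint_chi hww').mono (ht.subset_chi w) (ht.subset_chi w')

theorem IsThinning.monotone_card_thinIter (ht : T.IsThinning t) (v : A) :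
    Monotone fun n => (thinIter t n v).card :=
  monotone_nat_of_le_succ fun n => by
    rw [ht.card_thinIter_succ, Finset.card_eq_sum_ones]
    exact Finset.sum_le_sum fun w _ => (ht.nonempty w).card_pos

theorem IsThinning.chi_subset_of_card_thinIter_succ_le (ht : T.IsThinning t) {n : ℕ} {v w : A}
    (hn : (thinIter t (n + 1) v).card ≤ (thinIter t n v).card) (hw : w ∈ thinIter t n v) :
    T.chi w ⊆ thinIter t (n + 1) v := by
  have hcard : (t w).card = 1 := by
    by_contra hne
    rw [ht.card_thinIter_succ, Finset.card_eq_sum_ones] at hn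
    exact hn.not_gt <| Finset.sum_lt_sum (fun w _ => (ht.nonempty w).card_pos)
      ⟨w, hw, lt_of_le_of_ne (ht.nonempty w).card_pos (Ne.symm hne)⟩
  have hsub : (T.chi w).Subsingleton := Set.not_nontrivial_iff.1 fun h =>
    hcard.not_gt (Finset.one_lt_card_iff_nontrivial.2 (ht.nontrivial w h))
  obtain ⟨u, hu⟩ := ht.nonempty w
  exact fun u' hu' => hsub (ht.subset_chi w hu) hu' ▸ Finset.mem_biUnion.2 ⟨w, hw, hu⟩

theorem IsThinning.chiIter_subset_thinIter (ht : T.IsThinning t) {n : ℕ} {v w : A}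
    (hn : ∀ m, n ≤ m → (thinIter t (m + 1) v).card ≤ (thinIter t m v).card)
    (hw : w ∈ thinIter t n v) (k : ℕ) : T.chiIter k w ⊆ thinIter t (n + k) v := by
  induction k with
  | zero => simpa [chiIter] using hw
  | succ k ih =>
    exact Set.iUnion₂_subset fun u hu =>
      ht.chi_subset_of_card_thinIter_succ_le (hn (n + k) (n.le_add_right k)) (ih hu)

theorem IsThinning.tendsto_card_thinIter (ht : T.IsThinning t) {v : A}
    (hfert : ∀ k, ∀ w ∈ T.chiIter k v, Tendsto (fun n => (T.chiIter n w).encard) atTop (𝓝 ⊤)) :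
    Tendsto (fun n => (thinIter t n v).card) atTop atTop := by
  have hmono := ht.monotone_card_thinIter v
  refine tendsto_atTop_atTop_of_monotone' hmono fun hbdd => ?_
  obtain ⟨n, hn⟩ := Nat.sSup_mem (Set.range_nonempty _) hbdd
  have hmax (m : ℕ) : (thinIter t m v).card ≤ (thinIter t n v).card :=
    (le_csSup hbdd ⟨m, rfl⟩).trans_eq hn.symm
  obtain ⟨w, hw⟩ := Finset.card_pos.1 (Nat.one_pos.trans_le (hmax 0))
  obtain ⟨k, hk⟩ := ((hfert n w (ht.thinIter_subset_chiIter n v hw)).eventually_const_lt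
    (ENat.natCast_lt_top (thinIter t n v).card)).exists
  have hsub : T.chiIter k w ⊆ thinIter t (n + k) v :=
    ht.chiIter_subset_thinIter (fun m hm => (hmax (m + 1)).trans (hmono hm)) hw k
  have hle := Set.encard_le_encard hsub
  rw [Set.encard_coe_eq_coe_finsetCard] at hle
  exact hk.not_ge (hle.trans (by exact_mod_cast hmax (n + k)))

theorem IsThinning.pow_le_enorm_wt (ht : T.IsThinning t) {lam : A → ℂ} {r : ℝ≥0∞} {v : A}
    (hr : ∀ n, ∀ w ∈ thinIter t n v, ∀ u ∈ t w, r ≤ ‖lam u‖ₑ) {n : ℕ} {u : A}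
    (hu : u ∈ thinIter t n v) : r ^ n ≤ ‖T.wt lam n u‖ₑ := by
  induction n generalizing u with
  | zero => simp [wt]
  | succ n ih =>
    obtain ⟨w, hw, hu⟩ := Finset.mem_biUnion.1 hu
    rw [wt_succ, enorm_mul, pow_succ, (ht.subset_chi w hu).2]
    exact mul_le_mul' (ih hw) (hr n w hw u hu)

theorem IsThinning.card_mul_le_wtSum (ht : T.IsThinning t) {lam : A → ℂ} {r : ℝ≥0∞} {q : ℝ}
    (hq : 0 ≤ q) {v : A} (hr : ∀ n, ∀ w ∈ thinIter t n v, ∀ u ∈ t w, r ≤ ‖lam u‖ₑ) (n : ℕ) :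
    (thinIter t n v).card * (r ^ n) ^ q ≤ T.wtSum lam q n v := by
  rw [← nsmul_eq_mul]
  exact (Finset.card_nsmul_le_sum _ _ _ fun u hu =>
    ENNReal.rpow_le_rpow (ht.pow_le_enorm_wt hr hu) hq).trans
    (T.sum_le_wtSum (ht.thinIter_subset_chiIter n v))

end Thinning

section ThinWeight

/-- The weight of the counterexample: `1` on selected edges below `v₀`, which keeps `λ(v₀ → u)`
bounded, `2` on the other selected edges, and a small positive number `s u` on edges that are not
selected. The weight of the edge from `T.par u` to `u` is stored at `u`. -/
noncomputable def thinWeight (t : A → Finset A) (v₀ : A) (s : A → ℝ≥0) (u : A) : ℂ :=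
  open Classical in
  if u ∈ t (T.par u) then if u ∈ T.strictDesc v₀ then 1 else 2 else ((s u : ℝ) : ℂ)

variable {T} {t : A → Finset A} {v₀ : A} {s : A → ℝ≥0}

theorem thinWeight_ne_zero (hs : ∀ u, s u ≠ 0) (u : A) : T.thinWeight t v₀ s u ≠ 0 := by
  unfold thinWeight
  split_ifs <;> simp [hs u]

theorem norm_thinWeight_le_two (hs : ∀ u, s u ≤ 1) (u : A) : ‖T.thinWeight t v₀ s u‖ ≤ 2 := by
  have hsu : (s u : ℝ) ≤ 1 := hs u
  unfold thinWeight
  split_ifs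
  · norm_num
  · norm_num
  · rw [Complex.norm_real, NNReal.norm_eq]
    linarith

theorem norm_thinWeight_le_one (hs : ∀ u, s u ≤ 1) {u : A} (hu : u ∈ T.strictDesc v₀) :
    ‖T.thinWeight t v₀ s u‖ ≤ 1 := by
  rw [thinWeight, if_pos hu]
  split_ifs
  · rw [norm_one]
  · simpa using hs u

theorem tsum_chi_enorm_thinWeight_le (hcard : ∀ w, (t w).card ≤ 2) (hs : ∑' u, (s u : ℝ≥0∞) ≤ 1)
    {q : ℝ} (hq : 1 ≤ q) (v : A) :
    ∑' u : T.chi v, ‖T.thinWeight t v₀ s u‖ₑ ^ q ≤ 2 * 2 ^ q + 1 := by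
  have hs' (u : A) : (s u : ℝ≥0∞) ≤ 1 := (ENNReal.le_tsum u).trans hs
  have hterm (u : T.chi v) : ‖T.thinWeight t v₀ s u‖ₑ ^ q ≤
      (t v : Set A).indicator (fun _ => 2 ^ q) u + s u := by
    by_cases hu : (u : A) ∈ t v
    · rw [Set.indicator_of_mem (Finset.mem_coe.2 hu)]
      have htwo : ‖T.thinWeight t v₀ s u‖ₑ ≤ (2 : ℝ≥0) :=
        enorm_le_coe.2 (norm_thinWeight_le_two (fun u => ENNReal.coe_le_one_iff.1 (hs' u)) u)
      exact le_add_right (ENNReal.rpow_le_rpow htwo (zero_le_one.trans hq))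
    · rw [Set.indicator_of_notMem (Finset.mem_coe.not.2 hu), zero_add, thinWeight, u.2.2, if_neg hu,
        enorm_eq_nnnorm, Complex.nnnorm_real, NNReal.nnnorm_eq]
      exact ENNReal.rpow_le_self_of_le_one (hs' u) hq
  calc ∑' u : T.chi v, ‖T.thinWeight t v₀ s u‖ₑ ^ q
      ≤ ∑' u : T.chi v, ((t v : Set A).indicator (fun _ => 2 ^ q) (u : A) + (s u : ℝ≥0∞)) :=
        ENNReal.tsum_le_tsum hterm
    _ ≤ ∑' u : A, ((t v : Set A).indicator (fun _ => 2 ^ q) u + (s u : ℝ≥0∞)) :=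
        ENNReal.tsum_comp_le_tsum_of_injective Subtype.val_injective _
    _ = (t v).card * 2 ^ q + ∑' u, (s u : ℝ≥0∞) := by
        rw [ENNReal.tsum_add, ← tsum_subtype, Finset.tsum_subtype' (t v) fun _ => (2 : ℝ≥0∞) ^ q,
          Finset.sum_const, nsmul_eq_mul]
    _ ≤ 2 * 2 ^ q + 1 := by
        gcongr
        exact_mod_cast hcard v

theorem IsThinning.tendsto_wtSum_thinWeight_of_mem_strictDesc (ht : T.IsThinning t) {q : ℝ}
    (hq : 0 ≤ q)
    (hfert : ∀ v ∈ T.strictDesc v₀, Tendsto (fun n => (T.chiIter n v).encard) atTop (𝓝 ⊤))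
    {v : A} (hv : v ∈ T.strictDesc v₀) :
    Tendsto (fun n => T.wtSum (T.thinWeight t v₀ s) q n v) atTop (𝓝 ∞) := by
  classical
  have hone (n : ℕ) (w : A) (hw : w ∈ thinIter t n v) (u : A) (hu : u ∈ t w) :
      1 ≤ ‖T.thinWeight t v₀ s u‖ₑ := by
    have huv : u ∈ T.strictDesc v₀ := T.mem_strictDesc_of_mem_chiIter hv <|
      ht.thinIter_subset_chiIter (n + 1) v (Finset.mem_biUnion.2 ⟨w, hw, hu⟩)
    rw [thinWeight, (ht.subset_chi w hu).2, if_pos hu, if_pos huv, enorm_one]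
  have hcard := ht.tendsto_card_thinIter fun k w hw =>
    hfert w (T.mem_strictDesc_of_mem_chiIter hv hw)
  refine tendsto_nhds_top_mono (ENNReal.tendsto_nat_nhds_top.comp hcard)
    (Eventually.of_forall fun n => ?_)
  simpa using ht.card_mul_le_wtSum hq hone n

theorem IsThinning.tendsto_wtSum_thinWeight_of_forall_notMem_strictDesc (ht : T.IsThinning t)
    {q : ℝ} (hq : 0 < q) {v : A} (hv : ∀ n, ∀ u ∈ T.chiIter n v, u ∉ T.strictDesc v₀) :
    Tendsto (fun n => T.wtSum (T.thinWeight t v₀ s) q n v) atTop (𝓝 ∞) := by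
  classical
  have htwo (n : ℕ) (w : A) (hw : w ∈ thinIter t n v) (u : A) (hu : u ∈ t w) :
      2 ≤ ‖T.thinWeight t v₀ s u‖ₑ := by
    have huv : u ∉ T.strictDesc v₀ := hv (n + 1) u <|
      ht.thinIter_subset_chiIter (n + 1) v (Finset.mem_biUnion.2 ⟨w, hw, hu⟩)
    rw [thinWeight, (ht.subset_chi w hu).2, if_pos hu, if_neg huv, ← ofReal_norm]
    simp
  have hpow : Tendsto (fun n : ℕ => ((2 : ℝ≥0∞) ^ n) ^ q) atTop (𝓝 ∞) := by
    simpa only [ENNReal.top_rpow_of_pos hq, Function.comp_def] using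
      ((ENNReal.continuous_rpow_const (y := q)).tendsto ∞).comp
        (ENNReal.tendsto_pow_atTop_nhds_top_iff.2 ENNReal.one_lt_two)
  refine tendsto_nhds_top_mono hpow (Eventually.of_forall fun n => ?_)
  have hpos : 1 ≤ (thinIter t n v).card := ht.monotone_card_thinIter v n.zero_le
  calc ((2 : ℝ≥0∞) ^ n) ^ q = (1 : ℕ) * ((2 : ℝ≥0∞) ^ n) ^ q := by rw [Nat.cast_one, one_mul]
    _ ≤ (thinIter t n v).card * ((2 : ℝ≥0∞) ^ n) ^ q := by gcongr
    _ ≤ _ := ht.card_mul_le_wtSum hq.le htwo n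

theorem IsThinning.tendsto_wtSum_thinWeight (ht : T.IsThinning t) (hs : ∀ u, s u ≠ 0) {q : ℝ}
    (hq : 0 < q)
    (hfert : ∀ v ∈ T.strictDesc v₀, Tendsto (fun n => (T.chiIter n v).encard) atTop (𝓝 ⊤))
    (v : A) : Tendsto (fun n => T.wtSum (T.thinWeight t v₀ s) q n v) atTop (𝓝 ∞) := by
  by_cases hv : ∀ n, ∀ u ∈ T.chiIter n v, u ∉ T.strictDesc v₀
  · exact ht.tendsto_wtSum_thinWeight_of_forall_notMem_strictDesc hq hv
  · push Not at hv
    obtain ⟨k, w, hwv, hw⟩ := hv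
    exact T.tendsto_wtSum_of_mem_chiIter hq.le (thinWeight_ne_zero hs) hwv
      (ht.tendsto_wtSum_thinWeight_of_mem_strictDesc hq.le hfert hw)

end ThinWeight

end DirTree

/-- Let `A` be a rooted leafless directed tree containing a fertile
vertex `v₀` (i.e. `|Chi^n(v)| → ∞` for every descendant `v` of `v₀`). Then for every
`1 < p < ∞` there is a weight `λ` with `0 < |λ_v| ≤ 2` inducing a bounded weighted
backward shift `B` on `ℓ^p(A)` which is (topologically) mixing, while
`sup_n sup_{u ∈ Chi^n(v₀)} |λ(v₀→u)| < ∞`; consequently `B` has no hypercyclic algebra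
for the coordinatewise product. -/
theorem stmt19 {A : Type*} [Countable A] (T : DirTree A)
    (hleaf : ∀ v : A, (T.chi v).Nonempty)
    (v₀ : A)
    (hfert : ∀ v : A, (∃ n : ℕ, 0 < n ∧ v ∈ T.chiIter n v₀) →
      Tendsto (fun n : ℕ => (T.chiIter n v).encard) atTop (𝓝 ⊤))
    (p : ℝ≥0∞) [Fact (1 ≤ p)] (hp1 : 1 < p) (hp2 : p ≠ ∞) :
    ∃ lam : A → ℂ, (∀ v, 0 < ‖lam v‖ ∧ ‖lam v‖ ≤ 2) ∧
      ∃ B : lp (fun _ : A => ℂ) p →L[ℂ] lp (fun _ : A => ℂ) p,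
        T.IsWBS lam B ∧
        (∀ U V : Set (lp (fun _ : A => ℂ) p),
          IsOpen U → U.Nonempty → IsOpen V → V.Nonempty →
          ∃ N : ℕ, ∀ n : ℕ, N ≤ n → ∃ f ∈ U, (B ^ n) f ∈ V) ∧
        (∃ C : ℝ, ∀ n : ℕ, ∀ u ∈ T.chiIter n v₀, ‖T.wt lam n u‖ ≤ C) ∧
        ¬ ∃ S : Set (lp (fun _ : A => ℂ) p),
            (∃ f ∈ S, f ≠ 0) ∧
            (∀ f ∈ S, ∀ g ∈ S, f + g ∈ S) ∧
            (∀ c : ℂ, ∀ f ∈ S, c • f ∈ S) ∧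
            (∀ f ∈ S, ∀ g ∈ S, ∃ h ∈ S, ∀ v : A,
              (h : ∀ _ : A, ℂ) v = (f : ∀ _ : A, ℂ) v * (g : ∀ _ : A, ℂ) v) ∧
            (∀ f ∈ S, f ≠ 0 → Dense (Set.range fun n : ℕ => (B ^ n) f)) := by
  set q := p.toReal.conjExponent
  have hpq : p.toReal.HolderConjugate q :=
    .conjExponent ((ENNReal.toReal_lt_toReal ENNReal.one_ne_top hp2).2 hp1)
  obtain ⟨t, ht⟩ := T.exists_isThinning hleaf
  obtain ⟨s, hs0, hs⟩ := ENNReal.exists_pos_sum_of_countable one_ne_zero A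
  have hs0 (u : A) : s u ≠ 0 := (hs0 u).ne'
  have hs1 (u : A) : s u ≤ 1 := ENNReal.coe_le_one_iff.1 ((ENNReal.le_tsum u).trans hs.le)
  obtain ⟨B, hB⟩ := T.exists_isWBS hpq (K := 2 * 2 ^ q + 1) (lam := T.thinWeight t v₀ s) fun v => by
    simpa [ENNReal.coe_rpow_of_nonneg _ hpq.symm.nonneg] using
      DirTree.tsum_chi_enorm_thinWeight_le ht.card_le_two hs.le hpq.symm.lt.le v
  have hwt (n : ℕ) (u : A) (hu : u ∈ T.chiIter n v₀) : ‖T.wt (T.thinWeight t v₀ s) n u‖ ≤ 1 :=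
    T.norm_wt_le_one (fun _ => DirTree.norm_thinWeight_le_one hs1) hu
  refine ⟨T.thinWeight t v₀ s, fun v => ⟨norm_pos_iff.2 (DirTree.thinWeight_ne_zero hs0 v),
    DirTree.norm_thinWeight_le_two hs1 v⟩, B, hB, fun U V hU hU' hV hV' => ?_, ⟨1, hwt⟩, ?_⟩
  · exact eventually_atTop.1 <| hB.eventually_exists_pow_apply_mem hp2 hpq
      (ht.tendsto_wtSum_thinWeight hs0 hpq.symm.pos hfert) hU hU' hV hV'
  · rintro ⟨S, ⟨f, hf, hf0⟩, -, -, hmul, hdense⟩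
    obtain ⟨h, hh, hh0, hsum⟩ := exists_mem_ne_zero_summable_norm hp2 hmul hf hf0
    exact hB.not_denseRange_pow hp2 hwt hsum (hdense h hh hh0)
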